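/- Let h be a harmonic function on the ball B_r ⊂ ℝⁿ with finite Dirichlet energy and h(0) = 0. Then for any 0 < s < r, ∫_{B_s} h² ≤ (s/r)^{n+2} ∫_{B_r} h². -/

import Mathlib

open Real MeasureTheory Metric

noncomputable def laplacian {n : ℕ} (f : EuclideanSpace ℝ (Fin n) → ℝ)
    (x : EuclideanSpace ℝ (Fin n)) : ℝ :=
  ∑ i, fderiv ℝ (fun y => fderiv ℝ f y (EuclideanSpace.single i 1)) x
    (EuclideanSpace.single i 1)

/-!
For harmonic `u`, `v`, Green's identity on the unit ball, weighted by `1 - ‖x‖ ^ 2` to kill the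
boundary terms, says that the Euler operator `u ↦ (x ↦ Du(x) x)` is symmetric in `L²`. Hence
`∫ h (a x) h (b x)` over the unit ball has zero derivative along `(a, b) = (m eᵗ, m e⁻ᵗ)`, i.e. it
depends on `a b` only. By Cauchy–Schwarz, `F t = ∫ h (t x) ^ 2` is then logarithmically convex along
the geometric sequence `r q ^ k`, where `q = s / r`. Since `h 0 = 0` forces `F t = O(t ^ 2)`, such a
sequence must drop by at least the factor `q ^ 2` already in its first step, `F s ≤ q ^ 2 F r`, and
rescaling the unit ball to the balls of radius `s` and `r` contributes the remaining factor `q ^ n`.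
-/

open Set Filter Topology Module
open scoped ENNReal Laplacian
open InnerProductSpace (HarmonicOnNhd)

section CauchySchwarz

variable {X : Type*} [MeasurableSpace X] {μ : Measure X}

theorem sq_integral_mul_le {f g : X → ℝ} (hf : MemLp f 2 μ) (hg : MemLp g 2 μ) :
    (∫ x, f x * g x ∂μ) ^ 2 ≤ (∫ x, f x ^ 2 ∂μ) * ∫ x, g x ^ 2 ∂μ := by
  have integral_mul_eq_inner {u v : X → ℝ} (hu : MemLp u 2 μ) (hv : MemLp v 2 μ) :
      ∫ x, u x * v x ∂μ = inner ℝ (hu.toLp u) (hv.toLp v) := by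
    refine integral_congr_ae ?_
    filter_upwards [hu.coeFn_toLp, hv.coeFn_toLp] with x hux hvx
    simp only [hux, hvx, RCLike.inner_apply, conj_trivial, mul_comm]
  simpa only [sq, integral_mul_eq_inner, hf, hg] using
    real_inner_mul_inner_self_le (hf.toLp f) (hg.toLp g)

theorem memLp_restrict_of_continuousOn [TopologicalSpace X] [T2Space X] [BorelSpace X]
    {F : Type*} [NormedAddCommGroup F] [SecondCountableTopologyEither X F]
    [IsFiniteMeasureOnCompacts μ] {K : Set X} (hK : IsCompact K) {f : X → F}
    (hf : ContinuousOn f K) {p : ℝ≥0∞} : MemLp f p (μ.restrict K) := by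
  obtain ⟨C, hC⟩ := hK.exists_bound_of_continuousOn hf
  have : IsFiniteMeasure (μ.restrict K) := isFiniteMeasure_restrict.2 hK.measure_lt_top.ne
  exact .of_bound (hf.aestronglyMeasurable_of_isCompact hK hK.measurableSet) C
    ((ae_restrict_mem hK.measurableSet).mono hC)

end CauchySchwarz

theorem mul_le_mul_of_log_convex {f : ℕ → ℝ} (hf : ∀ k, 0 ≤ f k)
    (hconv : ∀ k, f (k + 1) ^ 2 ≤ f k * f (k + 2)) (k : ℕ) : f 1 * f k ≤ f 0 * f (k + 1) := by
  induction k with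
  | zero => rw [mul_comm]
  | succ k ih =>
    rcases (hf (k + 1)).eq_or_lt with hzero | hpos
    · rw [← hzero, mul_zero]
      exact mul_nonneg (hf 0) (hf _)
    · refine le_of_mul_le_mul_right ?_ hpos
      calc f 1 * f (k + 1) * f (k + 1) = f 1 * f (k + 1) ^ 2 := by ring
        _ ≤ f 1 * (f k * f (k + 2)) := mul_le_mul_of_nonneg_left (hconv k) (hf 1)
        _ = f 1 * f k * f (k + 2) := by ring
        _ ≤ f 0 * f (k + 1) * f (k + 2) := mul_le_mul_of_nonneg_right ih (hf _)
        _ = f 0 * f (k + 2) * f (k + 1) := by ring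

theorem le_mul_of_log_convex_of_isBigO {f : ℕ → ℝ} {q : ℝ} (hq : 0 < q) (hf : ∀ k, 0 ≤ f k)
    (hconv : ∀ k, f (k + 1) ^ 2 ≤ f k * f (k + 2)) (hO : f =O[atTop] fun k => q ^ k) :
    f 1 ≤ q * f 0 := by
  rcases (hf 0).eq_or_lt with hzero | hpos
  · have hsq := hconv 0
    rw [← hzero, zero_mul] at hsq
    rw [← hzero, mul_zero, pow_eq_zero_iff two_ne_zero |>.1 (hsq.antisymm (sq_nonneg _))]
  -- The ratios `f (k + 1) / f k` increase, so a first ratio above `q` contradicts `O(q ^ k)`.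
  by_contra! hlt
  have hratio : 1 < f 1 / (q * f 0) := (one_lt_div (by positivity)).2 hlt
  have hlower (k : ℕ) : f 1 ^ k * f 0 ≤ f 0 ^ k * f k := by
    induction k with
    | zero => simp
    | succ k ih =>
      calc f 1 ^ (k + 1) * f 0 = f 1 * (f 1 ^ k * f 0) := by ring
        _ ≤ f 1 * (f 0 ^ k * f k) := mul_le_mul_of_nonneg_left ih (hf 1)
        _ = f 0 ^ k * (f 1 * f k) := by ring
        _ ≤ f 0 ^ k * (f 0 * f (k + 1)) := by
          gcongr ?_ * ?_
          exact mul_le_mul_of_log_convex hf hconv k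
        _ = f 0 ^ (k + 1) * f (k + 1) := by ring
  obtain ⟨C, hC⟩ := hO.bound
  obtain ⟨k, hkC, hk⟩ := (hC.and
    ((tendsto_pow_atTop_atTop_of_one_lt hratio).eventually_gt_atTop (C / f 0))).exists
  rw [div_pow, div_lt_div_iff₀ hpos (by positivity), mul_pow] at hk
  rw [Real.norm_of_nonneg (hf k), Real.norm_of_nonneg (by positivity)] at hkC
  have := calc f 1 ^ k * f 0 ≤ f 0 ^ k * f k := hlower k
    _ ≤ f 0 ^ k * (C * q ^ k) := by gcongr
  linarith

theorem hasDerivAt_setIntegral_of_continuous {X F : Type*} [TopologicalSpace X] [T2Space X]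
    [MeasurableSpace X] [BorelSpace X]
    [NormedAddCommGroup F] [NormedSpace ℝ F] [SecondCountableTopologyEither X F]
    {μ : Measure X} [IsFiniteMeasureOnCompacts μ] {K : Set X} (hK : IsCompact K)
    {f f' : ℝ → X → F} (hf : ∀ t, Continuous (f t)) (hf' : Continuous (Function.uncurry f'))
    (hderiv : ∀ t, ∀ x ∈ K, HasDerivAt (f · x) (f' t x) t) (t : ℝ) :
    HasDerivAt (fun t => ∫ x in K, f t x ∂μ) (∫ x in K, f' t x ∂μ) t := by
  have hf't : Continuous (f' t) := hf'.comp (by fun_prop : Continuous fun x => (t, x))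
  obtain ⟨C, hC⟩ := ((isCompact_closedBall t 1).prod hK).exists_bound_of_continuousOn
    hf'.continuousOn
  refine (hasDerivAt_integral_of_dominated_loc_of_deriv_le (bound := fun _ => C)
    (closedBall_mem_nhds t one_pos)
    (.of_forall fun t => (hf t).continuousOn.aestronglyMeasurable_of_isCompact hK hK.measurableSet)
    ((hf t).continuousOn.integrableOn_compact hK)
    (hf't.continuousOn.aestronglyMeasurable_of_isCompact hK hK.measurableSet)
    ?_ (integrableOn_const hK.measure_lt_top.ne) ?_).2
  · filter_upwards [ae_restrict_mem hK.measurableSet] with x hx t ht using hC (t, x) ⟨ht, hx⟩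
  · filter_upwards [ae_restrict_mem hK.measurableSet] with x hx t _ using hderiv t x hx

theorem exists_contDiff_hasCompactSupport_eqOn_ball {E : Type*} [NormedAddCommGroup E]
    [NormedSpace ℝ E] [FiniteDimensional ℝ E]
    {F : Type*} [NormedAddCommGroup F] [NormedSpace ℝ F] {k : ℕ∞}
    {f : E → F} {c : E} {s r : ℝ} (hs : 0 < s) (hsr : s < r) (hf : ContDiffOn ℝ k f (ball c r)) :
    ∃ g : E → F, ContDiff ℝ k g ∧ HasCompactSupport g ∧ EqOn g f (ball c s) := by
  obtain ⟨ρ, hsρ, hρr⟩ := exists_between hsr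
  let φ : ContDiffBump c := ⟨s, ρ, hs, hsρ⟩
  have hφf : ContDiff ℝ k (fun x => φ x • f x) := by
    refine contDiff_iff_contDiffAt.2 fun x => ?_
    by_cases hx : x ∈ ball c r
    · exact φ.contDiffAt.smul (hf.contDiffAt (isOpen_ball.mem_nhds hx))
    · have hxφ : x ∉ tsupport φ :=
        φ.tsupport_eq ▸ fun hxρ => hx (closedBall_subset_ball hρr hxρ)
      refine contDiffAt_const (c := 0) |>.congr_of_eventuallyEq ?_
      filter_upwards [notMem_tsupport_iff_eventuallyEq.1 hxφ] with y hy
      rw [hy, Pi.zero_apply, zero_smul]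
  refine ⟨_, hφf, φ.hasCompactSupport.smul_right, fun x hx => ?_⟩
  simp only [φ.one_of_mem_closedBall (ball_subset_closedBall hx), one_smul]

section Laplacian

variable {E : Type*} [NormedAddCommGroup E] [InnerProductSpace ℝ E]
  {F : Type*} [NormedAddCommGroup F] [NormedSpace ℝ F]

theorem clm_apply_eq_sum_inner_smul {ι : Type*} [Fintype ι] (b : OrthonormalBasis ι ℝ E)
    (L : E →L[ℝ] F) (x : E) : L x = ∑ i, inner ℝ x (b i) • L (b i) := by
  conv_lhs => rw [← b.sum_repr' x]
  simp only [map_sum, map_smul, real_inner_comm]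

variable [FiniteDimensional ℝ E]

theorem laplacian_eq_sum_fderiv_fderiv {ι : Type*} [Fintype ι] (b : OrthonormalBasis ι ℝ E)
    {f : E → F} {x : E} (hf : ContDiffAt ℝ 2 f x) :
    (Δ f) x = ∑ i, fderiv ℝ (fun y => fderiv ℝ f y (b i)) x (b i) := by
  have hf' : DifferentiableAt ℝ (fderiv ℝ f) x :=
    (hf.fderiv_right (m := 1) le_rfl).differentiableAt one_ne_zero
  rw [InnerProductSpace.laplacian_eq_iteratedFDeriv_orthonormalBasis f b]
  refine Finset.sum_congr rfl fun i _ => ?_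
  rw [iteratedFDeriv_two_apply, fderiv_clm_apply hf' (differentiableAt_const _)]
  simp

theorem laplacian_comp_smul {f : E → F} (hf : ContDiff ℝ 2 f) (a : ℝ) (x : E) :
    (Δ fun y => f (a • y)) x = a ^ 2 • (Δ f) (a • x) := by
  have hiter : iteratedFDeriv ℝ 2 (fun y => f (a • y)) =
      fun y => a ^ 2 • iteratedFDeriv ℝ 2 f (a • y) := iteratedFDeriv_comp_const_smul a hf
  simp only [InnerProductSpace.laplacian_eq_iteratedFDeriv_stdOrthonormalBasis, hiter,
    Finset.smul_sum, _root_.smul_apply]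

theorem mul_laplacian_sub_mul_laplacian_eq_sum {ι : Type*} [Fintype ι]
    (b : OrthonormalBasis ι ℝ E) {u v : E → ℝ} (hu : ContDiff ℝ 2 u) (hv : ContDiff ℝ 2 v)
    (x : E) :
    v x * (Δ u) x - u x * (Δ v) x =
      ∑ i, fderiv ℝ (fun y => v y * fderiv ℝ u y (b i) - u y * fderiv ℝ v y (b i)) x (b i) := by
  rw [laplacian_eq_sum_fderiv_fderiv b hu.contDiffAt,
    laplacian_eq_sum_fderiv_fderiv b hv.contDiffAt, Finset.mul_sum, Finset.mul_sum,
    ← Finset.sum_sub_distrib]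
  refine Finset.sum_congr rfl fun i _ => ?_
  have hderiv {f : E → ℝ} (hf : ContDiff ℝ 2 f) :
      HasFDerivAt f (fderiv ℝ f x) x ∧ HasFDerivAt (fun y => fderiv ℝ f y (b i))
        (fderiv ℝ (fun y => fderiv ℝ f y (b i)) x) x :=
    ⟨(hf.differentiable two_ne_zero x).hasFDerivAt,
      (((hf.fderiv_right (m := 1) le_rfl).clm_apply contDiff_const).differentiable one_ne_zero
        x).hasFDerivAt⟩
  rw [(((hderiv hv).1.fun_mul (hderiv hu).2).fun_sub
    ((hderiv hu).1.fun_mul (hderiv hv).2)).fderiv]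
  simp only [_root_.sub_apply, _root_.add_apply, _root_.smul_apply, smul_eq_mul]
  ring

end Laplacian

section Green

theorem lipschitzWith_max_one_sub_norm_sq {E : Type*} [SeminormedAddCommGroup E] :
    LipschitzWith 2 fun x : E => max (1 - ‖x‖ ^ 2) 0 := by
  refine LipschitzWith.of_dist_le_mul fun x y => ?_
  have hmin (z : E) : max (1 - ‖z‖ ^ 2) 0 = 1 - min ‖z‖ 1 ^ 2 := by
    rcases le_total ‖z‖ 1 with hz | hz
    · rw [min_eq_left hz, max_eq_left (by nlinarith [norm_nonneg z])]
    · rw [min_eq_right hz, max_eq_right (by nlinarith), one_pow, sub_self]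
  have hxy : |min ‖x‖ 1 - min ‖y‖ 1| ≤ dist x y :=
    (abs_min_sub_min_le_max _ _ _ _).trans <| by
      simpa [dist_eq_norm] using abs_norm_sub_norm_le x y
  have hsum : |min ‖x‖ 1 + min ‖y‖ 1| ≤ 2 := by
    rw [abs_of_nonneg (by positivity)]
    linarith [min_le_right ‖x‖ 1, min_le_right ‖y‖ 1]
  calc dist (max (1 - ‖x‖ ^ 2) 0) (max (1 - ‖y‖ ^ 2) 0)
      = |min ‖x‖ 1 + min ‖y‖ 1| * |min ‖x‖ 1 - min ‖y‖ 1| := by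
        rw [hmin, hmin, Real.dist_eq, ← abs_mul, ← abs_neg]
        ring_nf
    _ ≤ 2 * dist x y := by gcongr

theorem lineDeriv_max_one_sub_norm_sq_of_one_lt_norm {E : Type*} [NormedAddCommGroup E]
    [NormedSpace ℝ E] {x : E} (hx : 1 < ‖x‖) (v : E) :
    lineDeriv ℝ (fun y : E => max (1 - ‖y‖ ^ 2) 0) x v = 0 := by
  have heq : (fun y : E => max (1 - ‖y‖ ^ 2) 0) =ᶠ[𝓝 x] fun _ => 0 := by
    filter_upwards [continuous_norm.continuousAt.eventually_const_lt hx] with y hy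
    exact max_eq_right (by nlinarith)
  rw [heq.lineDeriv_eq]
  simp [lineDeriv]

variable {E : Type*} [NormedAddCommGroup E] [InnerProductSpace ℝ E]

theorem lineDeriv_max_one_sub_norm_sq_of_norm_lt_one {x : E} (hx : ‖x‖ < 1) (v : E) :
    lineDeriv ℝ (fun y : E => max (1 - ‖y‖ ^ 2) 0) x v = -(2 * inner ℝ x v) := by
  have heq : (fun y : E => max (1 - ‖y‖ ^ 2) 0) =ᶠ[𝓝 x] fun y => 1 - ‖y‖ ^ 2 := by
    filter_upwards [continuous_norm.continuousAt.eventually_lt_const hx] with y hy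
    exact max_eq_left (by nlinarith [norm_nonneg y])
  have hderiv : HasFDerivAt (fun y : E => max (1 - ‖y‖ ^ 2) 0) (-(2 • innerSL ℝ x)) x :=
    ((hasStrictFDerivAt_norm_sq x).hasFDerivAt.const_sub 1).congr_of_eventuallyEq heq
  rw [(hderiv.hasLineDerivAt v).lineDeriv]
  simp

variable [FiniteDimensional ℝ E] [MeasurableSpace E] [BorelSpace E]
  (μ : Measure E) [μ.IsAddHaarMeasure]

theorem lineDeriv_max_one_sub_norm_sq_ae_eq (v : E) :
    (lineDeriv ℝ (fun y : E => max (1 - ‖y‖ ^ 2) 0) · v) =ᵐ[μ]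
      (closedBall 0 1).indicator fun x => -(2 * inner ℝ x v) := by
  have hsphere : ∀ᵐ x ∂μ, x ∉ sphere (0 : E) 1 :=
    measure_eq_zero_iff_ae_notMem.1 (Measure.addHaar_sphere_of_ne_zero μ 0 one_ne_zero)
  filter_upwards [hsphere] with x hx
  rcases lt_or_gt_of_ne (mem_sphere_zero_iff_norm.not.1 hx) with hlt | hgt
  · rw [lineDeriv_max_one_sub_norm_sq_of_norm_lt_one hlt,
      indicator_of_mem (mem_closedBall_zero_iff.2 hlt.le)]
  · rw [lineDeriv_max_one_sub_norm_sq_of_one_lt_norm hgt,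
      indicator_of_notMem (mem_closedBall_zero_iff.not.2 hgt.not_ge)]

theorem setIntegral_closedBall_one_sub_norm_sq_mul_fderiv {w : E → ℝ} (hw : ContDiff ℝ 1 w)
    (v : E) :
    ∫ x in closedBall 0 1, (1 - ‖x‖ ^ 2) * fderiv ℝ w x v ∂μ =
      2 * ∫ x in closedBall 0 1, inner ℝ x v * w x ∂μ := by
  obtain ⟨g, hg, hgc, hgw⟩ := exists_contDiff_hasCompactSupport_eqOn_ball (k := 1) (c := (0 : E))
    two_pos (by norm_num : (2 : ℝ) < 3) hw.contDiffOn
  obtain ⟨C, hC⟩ := hg.lipschitzWith_of_hasCompactSupport hgc one_ne_zero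
  have hball {x : E} (hx : x ∈ closedBall 0 1) : x ∈ ball 0 2 :=
    closedBall_subset_ball one_lt_two hx
  have hparts := lipschitzWith_max_one_sub_norm_sq.integral_lineDeriv_mul_eq (μ := μ) hC hgc v
  have hleft : ∫ x, lineDeriv ℝ (fun y : E => max (1 - ‖y‖ ^ 2) 0) x v * g x ∂μ =
      -(2 * ∫ x in closedBall 0 1, inner ℝ x v * w x ∂μ) := by
    rw [← integral_const_mul, ← integral_neg, ← integral_indicator measurableSet_closedBall]
    refine integral_congr_ae ?_
    filter_upwards [lineDeriv_max_one_sub_norm_sq_ae_eq μ v] with x hx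
    rw [hx]
    by_cases hmem : x ∈ closedBall 0 1
    · simp only [indicator_of_mem hmem, hgw (hball hmem)]
      ring
    · simp only [indicator_of_notMem hmem, zero_mul]
  have hright : ∫ x, lineDeriv ℝ g x (-v) * max (1 - ‖x‖ ^ 2) 0 ∂μ =
      -∫ x in closedBall 0 1, (1 - ‖x‖ ^ 2) * fderiv ℝ w x v ∂μ := by
    rw [← integral_neg, ← integral_indicator measurableSet_closedBall]
    congr 1 with x
    rw [(hg.differentiable one_ne_zero x).lineDeriv_eq_fderiv]
    by_cases hmem : x ∈ closedBall 0 1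
    · have hnorm : ‖x‖ ≤ 1 := mem_closedBall_zero_iff.1 hmem
      rw [indicator_of_mem hmem, max_eq_left (by nlinarith [norm_nonneg x]), map_neg,
        (hgw.eventuallyEq_of_mem (isOpen_ball.mem_nhds (hball hmem))).fderiv_eq]
      ring
    · have hnorm : 1 < ‖x‖ := not_le.1 (mem_closedBall_zero_iff.not.1 hmem)
      rw [indicator_of_notMem hmem, max_eq_right (by nlinarith), mul_zero]
  linarith

theorem setIntegral_closedBall_green {u v : E → ℝ} (hu : ContDiff ℝ 2 u) (hv : ContDiff ℝ 2 v) :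
    2 * ∫ x in closedBall 0 1, (v x * fderiv ℝ u x x - u x * fderiv ℝ v x x) ∂μ =
      ∫ x in closedBall 0 1, (1 - ‖x‖ ^ 2) * (v x * (Δ u) x - u x * (Δ v) x) ∂μ := by
  let b := stdOrthonormalBasis ℝ E
  let w (i) (x : E) : ℝ := v x * fderiv ℝ u x (b i) - u x * fderiv ℝ v x (b i)
  have hw (i) : ContDiff ℝ 1 (w i) :=
    ((hv.of_le one_le_two).mul ((hu.fderiv_right le_rfl).clm_apply contDiff_const)).sub
      ((hu.of_le one_le_two).mul ((hv.fderiv_right le_rfl).clm_apply contDiff_const))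
  have hradial (x : E) :
      v x * fderiv ℝ u x x - u x * fderiv ℝ v x x = ∑ i, inner ℝ x (b i) * w i x := by
    rw [clm_apply_eq_sum_inner_smul b (fderiv ℝ u x), clm_apply_eq_sum_inner_smul b (fderiv ℝ v x),
      Finset.mul_sum, Finset.mul_sum, ← Finset.sum_sub_distrib]
    exact Finset.sum_congr rfl fun i _ => by simp only [w, smul_eq_mul]; ring
  have hdiv (x : E) : v x * (Δ u) x - u x * (Δ v) x = ∑ i, fderiv ℝ (w i) x (b i) :=
    mul_laplacian_sub_mul_laplacian_eq_sum b hu hv x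
  have hwcont (i) : Continuous (w i) := (hw i).continuous
  have hK := isCompact_closedBall (0 : E) 1
  simp_rw [hradial, hdiv, Finset.mul_sum]
  rw [integral_finsetSum _ fun i _ => Continuous.continuousOn (by fun_prop)
      |>.integrableOn_compact hK,
    integral_finsetSum _ fun i _ => Continuous.continuousOn (by fun_prop)
      |>.integrableOn_compact hK, Finset.mul_sum]
  exact Finset.sum_congr rfl fun i _ =>
    (setIntegral_closedBall_one_sub_norm_sq_mul_fderiv μ (hw i) (b i)).symm

end Green

section DilationPairing

variable {E : Type*} [NormedAddCommGroup E] [NormedSpace ℝ E] [MeasurableSpace E]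
  (μ : Measure E)

/-- The `L²` inner product over the unit ball of the dilates `x ↦ h (a • x)` and
`x ↦ h (b • x)`. For harmonic `h` it depends on `a` and `b` only through `a * b`. -/
noncomputable def dilationPairing (h : E → ℝ) (a b : ℝ) : ℝ :=
  ∫ x in closedBall 0 1, h (a • x) * h (b • x) ∂μ

variable {μ} {h : E → ℝ}

theorem dilationPairing_self (a : ℝ) :
    dilationPairing μ h a a = ∫ x in closedBall 0 1, h (a • x) ^ 2 ∂μ := by
  simp only [dilationPairing, sq]

theorem dilationPairing_self_nonneg (a : ℝ) : 0 ≤ dilationPairing μ h a a := by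
  rw [dilationPairing_self]
  exact integral_nonneg fun x => sq_nonneg _

variable [FiniteDimensional ℝ E]

theorem dilationPairing_self_isBigO [IsFiniteMeasureOnCompacts μ] (hh : DifferentiableAt ℝ h 0)
    (h0 : h 0 = 0) : (fun t => dilationPairing μ h t t) =O[𝓝 0] fun t => t ^ 2 := by
  have hbound : h =O[𝓝 0] fun x => x := by simpa [h0] using hh.isBigO_sub
  obtain ⟨C, hC⟩ := hbound.bound
  obtain ⟨ε, hε, hball⟩ := Metric.eventually_nhds_iff_ball.1 hC
  refine .of_bound (C ^ 2 * μ.real (closedBall 0 1)) ?_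
  filter_upwards [ball_mem_nhds (0 : ℝ) hε] with t ht
  rw [mem_ball_zero_iff] at ht
  rw [dilationPairing_self, mul_right_comm]
  refine norm_setIntegral_le_of_norm_le_const measure_closedBall_lt_top fun x hx => ?_
  have hx1 : ‖x‖ ≤ 1 := mem_closedBall_zero_iff.1 hx
  have htx : ‖t • x‖ ≤ ‖t‖ := by
    simpa only [norm_smul, mul_one] using mul_le_mul_of_nonneg_left hx1 (norm_nonneg t)
  have hhtx : ‖h (t • x)‖ ≤ C * ‖t • x‖ := hball _ (mem_ball_zero_iff.2 (htx.trans_lt ht))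
  calc ‖h (t • x) ^ 2‖ = ‖h (t • x)‖ ^ 2 := norm_pow _ _
    _ ≤ (C * ‖t • x‖) ^ 2 := by gcongr
    _ = C ^ 2 * ‖t • x‖ ^ 2 := mul_pow _ _ _
    _ ≤ C ^ 2 * ‖t ^ 2‖ := by rw [norm_pow]; gcongr

variable [BorelSpace E]

theorem dilationPairing_sq_le [IsFiniteMeasureOnCompacts μ] (hh : Continuous h) (a b : ℝ) :
    dilationPairing μ h a b ^ 2 ≤ dilationPairing μ h a a * dilationPairing μ h b b := by
  have hmem (c : ℝ) : MemLp (fun x => h (c • x)) 2 (μ.restrict (closedBall 0 1)) :=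
    memLp_restrict_of_continuousOn (isCompact_closedBall 0 1)
      (Continuous.continuousOn (by fun_prop))
  rw [dilationPairing_self, dilationPairing_self]
  exact sq_integral_mul_le (hmem a) (hmem b)

variable [μ.IsAddHaarMeasure]

theorem setIntegral_closedBall_sq_eq {t : ℝ} (ht : 0 < t) :
    ∫ x in closedBall 0 t, h x ^ 2 ∂μ = t ^ finrank ℝ E * dilationPairing μ h t t := by
  rw [dilationPairing_self, Measure.setIntegral_comp_smul_of_pos μ (fun x => h x ^ 2) _ ht,
    smul_unitClosedBall_of_nonneg ht.le, smul_eq_mul, mul_inv_cancel_left₀ (by positivity)]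

theorem hasDerivAt_dilationPairing_exp (hh : ContDiff ℝ 1 h) (m τ : ℝ) :
    HasDerivAt (fun τ => dilationPairing μ h (m * exp τ) (m * exp (-τ)))
      (∫ x in closedBall 0 1,
        (fderiv ℝ h ((m * exp τ) • x) ((m * exp τ) • x) * h ((m * exp (-τ)) • x) -
          h ((m * exp τ) • x) * fderiv ℝ h ((m * exp (-τ)) • x) ((m * exp (-τ)) • x)) ∂μ) τ := by
  refine hasDerivAt_setIntegral_of_continuous (isCompact_closedBall 0 1)
    (f := fun τ x => h ((m * exp τ) • x) * h ((m * exp (-τ)) • x))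
    (f' := fun τ x => fderiv ℝ h ((m * exp τ) • x) ((m * exp τ) • x) * h ((m * exp (-τ)) • x) -
      h ((m * exp τ) • x) * fderiv ℝ h ((m * exp (-τ)) • x) ((m * exp (-τ)) • x))
    (fun τ => by fun_prop) (by fun_prop) (fun τ x _ => ?_) τ
  have hdilate {c : ℝ → ℝ} {c' : ℝ} (hc : HasDerivAt c c' τ) :
      HasDerivAt (fun τ => h (c τ • x)) (fderiv ℝ h (c τ • x) (c' • x)) τ :=
    (hh.differentiable one_ne_zero _).hasFDerivAt.comp_hasDerivAt τ (hc.smul_const x)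
  have hexp : HasDerivAt (fun τ => m * exp τ) (m * exp τ) τ := (hasDerivAt_exp τ).const_mul m
  have hexp_neg : HasDerivAt (fun τ => m * exp (-τ)) (-(m * exp (-τ))) τ := by
    simpa using (hasDerivAt_neg τ).exp.const_mul m
  refine ((hdilate hexp).mul (hdilate hexp_neg)).congr_deriv ?_
  rw [neg_smul, map_neg]
  ring

end DilationPairing

section Harmonic

variable {E : Type*} [NormedAddCommGroup E] [InnerProductSpace ℝ E] [FiniteDimensional ℝ E]
  [MeasurableSpace E] [BorelSpace E] {μ : Measure E} [μ.IsAddHaarMeasure] {h : E → ℝ}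

theorem setIntegral_euler_comp_smul_eq_zero (hh : ContDiff ℝ 2 h) {r a b : ℝ}
    (hΔ : ∀ x ∈ ball 0 r, (Δ h) x = 0) (ha : |a| ≤ r) (hb : |b| ≤ r) :
    ∫ x in closedBall 0 1,
      (fderiv ℝ h (a • x) (a • x) * h (b • x) - h (a • x) * fderiv ℝ h (b • x) (b • x)) ∂μ =
        0 := by
  have hdilate (c : ℝ) : ContDiff ℝ 2 fun x => h (c • x) := by fun_prop
  have hΔdilate {c : ℝ} (hc : |c| ≤ r) {x : E} (hx : ‖x‖ < 1) :
      (Δ fun y => h (c • y)) x = 0 := by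
    rcases eq_or_ne c 0 with rfl | hc0
    · rw [laplacian_comp_smul hh, zero_pow two_ne_zero, zero_smul]
    · have hcx : ‖c • x‖ < r := by
        rw [norm_smul]
        exact (mul_lt_of_lt_one_right (norm_pos_iff.2 hc0) hx).trans_le hc
      rw [laplacian_comp_smul hh, hΔ _ (mem_ball_zero_iff.2 hcx), smul_zero]
  have hgreen := setIntegral_closedBall_green μ (hdilate a) (hdilate b)
  rw [setIntegral_eq_zero_of_forall_eq_zero (μ := μ) (t := closedBall 0 1)
    (f := fun x => (1 - ‖x‖ ^ 2) * _)] at hgreen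
  · convert (mul_eq_zero_iff_left two_ne_zero).1 hgreen using 3 with x
    simp only [fderiv_comp_smul, _root_.smul_apply, map_smul]
    ring
  · intro x hx
    rcases (mem_closedBall_zero_iff.1 hx).lt_or_eq with hlt | heq
    · rw [hΔdilate ha hlt, hΔdilate hb hlt, mul_zero, mul_zero, sub_zero, mul_zero]
    · rw [heq, one_pow, sub_self, zero_mul]

theorem dilationPairing_mul_div (hh : ContDiff ℝ 2 h) {r m l : ℝ}
    (hΔ : ∀ x ∈ ball 0 r, (Δ h) x = 0) (hm : 0 ≤ m) (hl : 1 ≤ l) (hml : m * l ≤ r) :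
    dilationPairing μ h (m * l) (m / l) = dilationPairing μ h m m := by
  have hl0 : 0 < l := one_pos.trans_le hl
  have hconst := constant_of_has_deriv_right_zero (a := 0) (b := log l)
    (f := fun τ => dilationPairing μ h (m * exp τ) (m * exp (-τ)))
    (fun τ _ => (hasDerivAt_dilationPairing_exp (hh.of_le one_le_two) m τ).continuousAt
      |>.continuousWithinAt)
    (fun τ hτ => by
      have hexp : exp τ ≤ l := (le_log_iff_exp_le hl0).1 hτ.2.le
      have hexp_neg : exp (-τ) ≤ l := (exp_le_one_iff.2 (neg_nonpos.2 hτ.1)).trans hl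
      have hle {c : ℝ} (hc0 : 0 ≤ c) (hcl : c ≤ l) : |m * c| ≤ r := by
        rw [abs_of_nonneg (by positivity)]
        exact (mul_le_mul_of_nonneg_left hcl hm).trans hml
      rw [← setIntegral_euler_comp_smul_eq_zero (μ := μ) hh hΔ (hle (exp_nonneg τ) hexp)
        (hle (exp_nonneg (-τ)) hexp_neg)]
      exact (hasDerivAt_dilationPairing_exp (hh.of_le one_le_two) m τ).hasDerivWithinAt)
    (log l) (right_mem_Icc.2 (log_nonneg hl))
  simpa [exp_log hl0, exp_neg, div_eq_mul_inv] using hconst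

theorem dilationPairing_self_le (hh : ContDiff ℝ 2 h) {s r : ℝ} (hs : 0 < s) (hsr : s < r)
    (hΔ : ∀ x ∈ ball 0 r, (Δ h) x = 0) (h0 : h 0 = 0) :
    dilationPairing μ h s s ≤ (s / r) ^ 2 * dilationPairing μ h r r := by
  have hr : 0 < r := hs.trans hsr
  set q := s / r
  have hq0 : 0 < q := div_pos hs hr
  have hq1 : q < 1 := (div_lt_one hr).2 hsr
  let f (k : ℕ) := dilationPairing μ h (r * q ^ k) (r * q ^ k)
  have hconv (k : ℕ) : f (k + 1) ^ 2 ≤ f k * f (k + 2) := by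
    have hup : r * q ^ (k + 1) * q⁻¹ = r * q ^ k := by
      rw [pow_succ, ← mul_assoc, mul_inv_cancel_right₀ hq0.ne']
    have hdown : r * q ^ (k + 1) / q⁻¹ = r * q ^ (k + 2) := by
      rw [div_inv_eq_mul, mul_assoc, ← pow_succ]
    have hinv := dilationPairing_mul_div (μ := μ) (l := q⁻¹) (m := r * q ^ (k + 1)) hh hΔ
      (by positivity) ((one_le_inv₀ hq0).2 hq1.le)
      (hup.trans_le (mul_le_of_le_one_right hr.le (pow_le_one₀ hq0.le hq1.le)))
    rw [hup, hdown] at hinv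
    calc f (k + 1) ^ 2 = dilationPairing μ h (r * q ^ k) (r * q ^ (k + 2)) ^ 2 := by rw [hinv]
      _ ≤ f k * f (k + 2) := dilationPairing_sq_le hh.continuous _ _
  have hO : f =O[atTop] fun k => (q ^ 2) ^ k := by
    have hlim : Tendsto (fun k : ℕ => r * q ^ k) atTop (𝓝 0) := by
      simpa using (tendsto_pow_atTop_nhds_zero_of_lt_one hq0.le hq1).const_mul r
    refine ((dilationPairing_self_isBigO (hh.differentiable two_ne_zero 0) h0).comp_tendsto
      hlim).trans ?_
    simpa only [Function.comp_def, mul_pow, pow_right_comm q _ 2] using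
      (Asymptotics.isBigO_refl (fun k => (q ^ 2) ^ k) atTop).const_mul_left (r ^ 2)
  have hle := le_mul_of_log_convex_of_isBigO (by positivity)
    (fun k => dilationPairing_self_nonneg (r * q ^ k)) hconv hO
  simpa [f, q, mul_div_cancel₀ s hr.ne'] using hle

end Harmonic

section Growth

variable {E : Type*} [NormedAddCommGroup E] [InnerProductSpace ℝ E] [FiniteDimensional ℝ E]
  [MeasurableSpace E] [BorelSpace E] {μ : Measure E} [μ.IsAddHaarMeasure]
  {h : E → ℝ} {s r : ℝ}

theorem setIntegral_closedBall_sq_le_of_harmonicOnNhd {R : ℝ} (hs : 0 < s) (hsr : s < r)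
    (hrR : r < R) (hh : HarmonicOnNhd h (ball 0 R)) (h0 : h 0 = 0) :
    ∫ x in closedBall 0 s, h x ^ 2 ∂μ ≤
      (s / r) ^ (finrank ℝ E + 2) * ∫ x in closedBall 0 r, h x ^ 2 ∂μ := by
  have hr : 0 < r := hs.trans hsr
  obtain ⟨ρ, hrρ, hρR⟩ := exists_between hrR
  obtain ⟨g, hg, -, hgh⟩ := exists_contDiff_hasCompactSupport_eqOn_ball (k := 2)
    (hr.trans hrρ) hρR fun x hx => (hh x hx).1.contDiffWithinAt
  have hΔ : ∀ x ∈ ball 0 r, (Δ g) x = 0 := fun x hx => by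
    have hxρ : ball 0 ρ ∈ 𝓝 x := isOpen_ball.mem_nhds (ball_subset_ball hrρ.le hx)
    rw [(InnerProductSpace.laplacian_congr_nhds (hgh.eventuallyEq_of_mem hxρ)).self_of_nhds]
    exact (hh x (ball_subset_ball hrR.le hx)).2.self_of_nhds
  have hg0 : g 0 = 0 := (hgh (mem_ball_self (hr.trans hrρ))).trans h0
  have hint {t : ℝ} (ht : t ≤ r) :
      ∫ x in closedBall 0 t, h x ^ 2 ∂μ = ∫ x in closedBall 0 t, g x ^ 2 ∂μ :=
    setIntegral_congr_fun measurableSet_closedBall fun x hx =>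
      congrArg (· ^ 2) (hgh (closedBall_subset_ball (ht.trans_lt hrρ) hx)).symm
  rw [hint hsr.le, hint le_rfl, setIntegral_closedBall_sq_eq hs, setIntegral_closedBall_sq_eq hr]
  calc s ^ finrank ℝ E * dilationPairing μ g s s
      ≤ s ^ finrank ℝ E * ((s / r) ^ 2 * dilationPairing μ g r r) := by
        gcongr
        exact dilationPairing_self_le hg hs hsr hΔ hg0
    _ = (s / r) ^ (finrank ℝ E + 2) * (r ^ finrank ℝ E * dilationPairing μ g r r) := by
        rw [pow_add, div_pow s r (finrank ℝ E)]
        field_simp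

theorem harmonic_L2_growth_general (hs : 0 < s) (hsr : s < r) (hh : HarmonicOnNhd h (ball 0 r))
    (hint : IntegrableOn (fun x => h x ^ 2) (ball 0 r) μ) (h0 : h 0 = 0) :
    ∫ x in ball 0 s, h x ^ 2 ∂μ ≤
      (s / r) ^ (finrank ℝ E + 2) * ∫ x in ball 0 r, h x ^ 2 ∂μ := by
  have hr : r ≠ 0 := (hs.trans hsr).ne'
  have hmono {A B : Set E} (hAB : A ⊆ B) (hB : B ⊆ ball 0 r) :
      ∫ x in A, h x ^ 2 ∂μ ≤ ∫ x in B, h x ^ 2 ∂μ :=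
    setIntegral_mono_set (hint.mono_set hB) (.of_forall fun x => sq_nonneg _) hAB.eventuallyLE
  have hlim : Tendsto (fun t => (s / t) ^ (finrank ℝ E + 2) * ∫ x in ball 0 r, h x ^ 2 ∂μ)
      (𝓝[<] r) (𝓝 ((s / r) ^ (finrank ℝ E + 2) * ∫ x in ball 0 r, h x ^ 2 ∂μ)) :=
    (((tendsto_const_nhds.div tendsto_id hr).pow _).mul_const _).mono_left nhdsWithin_le_nhds
  refine ge_of_tendsto hlim ?_
  filter_upwards [Ioo_mem_nhdsLT hsr] with t ⟨hst, htr⟩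
  have ht : 0 < t := hs.trans hst
  calc ∫ x in ball 0 s, h x ^ 2 ∂μ
      ≤ ∫ x in closedBall 0 s, h x ^ 2 ∂μ :=
        hmono ball_subset_closedBall (closedBall_subset_ball hsr)
    _ ≤ (s / t) ^ (finrank ℝ E + 2) * ∫ x in closedBall 0 t, h x ^ 2 ∂μ :=
        setIntegral_closedBall_sq_le_of_harmonicOnNhd hs hst htr hh h0
    _ ≤ (s / t) ^ (finrank ℝ E + 2) * ∫ x in ball 0 r, h x ^ 2 ∂μ :=
        mul_le_mul_of_nonneg_left (hmono (closedBall_subset_ball htr) subset_rfl) (by positivity)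

end Growth

section DirichletEnergy

theorem sq_sub_le_mul_setIntegral_sq {f f' : ℝ → ℝ} {a b : ℝ} (hab : a ≤ b)
    (hf : ∀ t ∈ Icc a b, HasDerivAt f (f' t) t) (hf' : ContinuousOn f' (Icc a b)) :
    (f b - f a) ^ 2 ≤ (b - a) * ∫ t in Icc a b, f' t ^ 2 := by
  have hftc : ∫ t in Icc a b, 1 * f' t = f b - f a := by
    simp only [one_mul]
    rw [integral_Icc_eq_integral_Ioc, ← intervalIntegral.integral_of_le hab]
    refine intervalIntegral.integral_eq_sub_of_hasDerivAt (fun t ht => hf t ?_)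
      (hf'.intervalIntegrable_of_Icc hab)
    rwa [← uIcc_of_le hab]
  have hcs := sq_integral_mul_le (memLp_restrict_of_continuousOn (μ := volume) isCompact_Icc
    (continuousOn_const (c := (1 : ℝ)))) (memLp_restrict_of_continuousOn isCompact_Icc hf')
  rw [hftc] at hcs
  simpa [hab] using hcs

variable {E : Type*} [NormedAddCommGroup E] [NormedSpace ℝ E] {h : E → ℝ} {r : ℝ}

theorem sq_sub_comp_smul_le (hh : ContDiffOn ℝ 1 h (ball 0 r)) {x : E} (hx : x ∈ ball 0 r)
    {a : ℝ} (ha0 : 0 ≤ a) (ha1 : a ≤ 1) :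
    (h x - h (a • x)) ^ 2 ≤
      (1 - a) * (‖x‖ ^ 2 * ∫ t in Icc a 1, ‖fderiv ℝ h (t • x)‖ ^ 2) := by
  have hmem : MapsTo (fun t : ℝ => t • x) (Icc a 1) (ball 0 r) := fun t ht =>
    (balanced_ball_zero (𝕜 := ℝ)).smul_mem
      (by rw [Real.norm_of_nonneg (ha0.trans ht.1)]; exact ht.2) hx
  have hfderiv : ContinuousOn (fun t : ℝ => fderiv ℝ h (t • x)) (Icc a 1) :=
    (hh.continuousOn_fderiv_of_isOpen isOpen_ball le_rfl).comp (by fun_prop) hmem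
  have hradial : ContinuousOn (fun t : ℝ => fderiv ℝ h (t • x) x) (Icc a 1) :=
    hfderiv.clm_apply continuousOn_const
  have hderiv : ∀ t ∈ Icc a 1, HasDerivAt (fun t : ℝ => h (t • x)) (fderiv ℝ h (t • x) x) t :=
    fun t ht => by
      have hdiff : DifferentiableAt ℝ h (t • x) :=
        (hh.contDiffAt (isOpen_ball.mem_nhds (hmem ht))).differentiableAt one_ne_zero
      exact (hdiff.hasFDerivAt.comp_hasDerivAt t ((hasDerivAt_id t).smul_const x)).congr_deriv
        (by rw [one_smul])
  calc (h x - h (a • x)) ^ 2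
      ≤ (1 - a) * ∫ t in Icc a 1, (fderiv ℝ h (t • x) x) ^ 2 := by
        simpa using sq_sub_le_mul_setIntegral_sq ha1 hderiv hradial
    _ ≤ (1 - a) * ∫ t in Icc a 1, ‖x‖ ^ 2 * ‖fderiv ℝ h (t • x)‖ ^ 2 := by
        refine mul_le_mul_of_nonneg_left (setIntegral_mono_on
          (hradial.pow 2).integrableOn_Icc
          (continuousOn_const.mul (hfderiv.norm.pow 2)).integrableOn_Icc measurableSet_Icc
          fun t _ => ?_) (sub_nonneg.2 ha1)
        rw [← mul_pow, mul_comm, sq_le_sq, abs_of_nonneg (by positivity : 0 ≤ _ * ‖x‖)]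
        exact (fderiv ℝ h (t • x)).le_opNorm x
    _ = (1 - a) * (‖x‖ ^ 2 * ∫ t in Icc a 1, ‖fderiv ℝ h (t • x)‖ ^ 2) := by
        rw [integral_const_mul]

variable [FiniteDimensional ℝ E] [MeasurableSpace E] [BorelSpace E] {μ : Measure E}
  [μ.IsAddHaarMeasure]

theorem integrable_setIntegral_comp_smul {F : Type*} [NormedAddCommGroup F] [NormedSpace ℝ F]
    {g : E → F} (hgm : StronglyMeasurable g) (hg : Integrable g μ) {a : ℝ} (ha : 0 < a) (b : ℝ) :
    Integrable (fun x => ∫ t in Icc a b, g (t • x)) μ := by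
  have hprod : Integrable (fun z : E × ℝ => g (z.2 • z.1))
      (μ.prod (volume.restrict (Icc a b))) := by
    have hm : StronglyMeasurable fun z : E × ℝ => g (z.2 • z.1) :=
      hgm.comp_measurable (by fun_prop)
    refine (integrable_prod_iff' hm.aestronglyMeasurable).2 ⟨?_, ?_⟩
    · filter_upwards [ae_restrict_mem measurableSet_Icc] with t ht
      exact hg.comp_smul (ha.trans_le ht.1).ne'
    · simp only [Measure.integral_comp_smul μ (‖g ·‖), smul_eq_mul]
      have hscale : ContinuousOn (fun t : ℝ => |(t ^ finrank ℝ E)⁻¹|) (Icc a b) :=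
        (ContinuousOn.inv₀ (by fun_prop) fun t ht => (pow_pos (ha.trans_le ht.1) _).ne').abs
      exact hscale.integrableOn_Icc.integrable.mul_const _
  exact hprod.integral_prod_left

theorem integrableOn_sq_of_integrableOn_norm_fderiv_sq (hr : 0 < r)
    (hh : ContDiffOn ℝ 1 h (ball 0 r))
    (hdir : IntegrableOn (fun x => ‖fderiv ℝ h x‖ ^ 2) (ball 0 r) μ) :
    IntegrableOn (fun x => h x ^ 2) (ball 0 r) μ := by
  -- `h` is bounded on the half ball, and `h x - h (x / 2)` is a radial integral of `fderiv ℝ h`.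
  let e : E → ℝ := (ball 0 r).indicator fun x => ‖fderiv ℝ h x‖ ^ 2
  have hem : StronglyMeasurable e :=
    (((measurable_fderiv ℝ h).norm.pow_const 2).indicator measurableSet_ball).stronglyMeasurable
  have hradial : Integrable (fun x => ∫ t in Icc (1 / 2 : ℝ) 1, e (t • x)) μ :=
    integrable_setIntegral_comp_smul hem (hdir.integrable_indicator measurableSet_ball)
      one_half_pos 1
  obtain ⟨M, hM⟩ := (isCompact_closedBall (0 : E) (r / 2)).exists_bound_of_continuousOn
    (hh.continuousOn.mono (closedBall_subset_ball (half_lt_self hr)))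
  have hbound : IntegrableOn (fun x => 2 * M ^ 2 + r ^ 2 * ∫ t in Icc (1 / 2 : ℝ) 1, e (t • x))
      (ball 0 r) μ :=
    (integrableOn_const measure_ball_lt_top.ne).add (hradial.integrableOn.const_mul (r ^ 2))
  refine hbound.mono' ((hh.continuousOn.pow 2).aestronglyMeasurable measurableSet_ball) ?_
  filter_upwards [ae_restrict_mem measurableSet_ball] with x hx
  have hxr : ‖x‖ < r := mem_ball_zero_iff.1 hx
  have hhalf : |h ((1 / 2 : ℝ) • x)| ≤ M := hM _ <| by
    rw [mem_closedBall_zero_iff, norm_smul, Real.norm_of_nonneg one_half_pos.le]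
    linarith
  have he : ∫ t in Icc (1 / 2 : ℝ) 1, ‖fderiv ℝ h (t • x)‖ ^ 2 =
      ∫ t in Icc (1 / 2 : ℝ) 1, e (t • x) :=
    setIntegral_congr_fun measurableSet_Icc fun t ht =>
      (indicator_of_mem ((balanced_ball_zero (𝕜 := ℝ)).smul_mem
        (by rw [Real.norm_of_nonneg (one_half_pos.le.trans ht.1)]; exact ht.2) hx)
        fun x => ‖fderiv ℝ h x‖ ^ 2).symm
  have he0 : 0 ≤ ∫ t in Icc (1 / 2 : ℝ) 1, e (t • x) := he ▸ integral_nonneg fun t => sq_nonneg _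
  have hdiff := sq_sub_comp_smul_le hh hx one_half_pos.le one_half_lt_one.le
  rw [he] at hdiff
  rw [Real.norm_of_nonneg (sq_nonneg _)]
  calc h x ^ 2 ≤ 2 * h ((1 / 2 : ℝ) • x) ^ 2 + 2 * (h x - h ((1 / 2 : ℝ) • x)) ^ 2 := by
        linarith [sq_nonneg (h x - 2 * h ((1 / 2 : ℝ) • x))]
    _ ≤ 2 * M ^ 2 + ‖x‖ ^ 2 * ∫ t in Icc (1 / 2 : ℝ) 1, e (t • x) := by
        linarith [sq_le_sq' (abs_le.1 hhalf).1 (abs_le.1 hhalf).2]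
    _ ≤ 2 * M ^ 2 + r ^ 2 * ∫ t in Icc (1 / 2 : ℝ) 1, e (t • x) := by gcongr

end DirichletEnergy

theorem harmonicOnNhd_of_laplacian_eq_zero {n : ℕ} {s : Set (EuclideanSpace ℝ (Fin n))}
    (hs : IsOpen s) {f : EuclideanSpace ℝ (Fin n) → ℝ} (hf : ContDiffOn ℝ 2 f s)
    (hΔ : ∀ x ∈ s, laplacian f x = 0) : HarmonicOnNhd f s := fun x hx => by
  refine ⟨hf.contDiffAt (hs.mem_nhds hx), ?_⟩
  filter_upwards [hs.mem_nhds hx] with y hy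
  rw [laplacian_eq_sum_fderiv_fderiv (EuclideanSpace.basisFun (Fin n) ℝ)
    (hf.contDiffAt (hs.mem_nhds hy))]
  simpa only [EuclideanSpace.basisFun_apply, Pi.zero_apply, laplacian] using hΔ y hy

theorem harmonic_L2_growth {n : ℕ} (r s : ℝ) (hr : 0 < r) (hs : 0 < s) (hsr : s < r)
    (h : EuclideanSpace ℝ (Fin n) → ℝ)
    (hsm : ContDiffOn ℝ 2 h (Metric.ball 0 r))
    (hharm : ∀ x ∈ Metric.ball (0 : EuclideanSpace ℝ (Fin n)) r, laplacian h x = 0)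
    (hdir : IntegrableOn (fun x => ‖fderiv ℝ h x‖ ^ 2) (Metric.ball 0 r))
    (h0 : h 0 = 0) :
    (∫ x in Metric.ball (0 : EuclideanSpace ℝ (Fin n)) s, (h x) ^ 2) ≤
      (s / r) ^ (n + 2) * ∫ x in Metric.ball (0 : EuclideanSpace ℝ (Fin n)) r, (h x) ^ 2 := by
  simpa only [finrank_euclideanSpace_fin] using harmonic_L2_growth_general hs hsr
    (harmonicOnNhd_of_laplacian_eq_zero isOpen_ball hsm hharm)
    (integrableOn_sq_of_integrableOn_norm_fderiv_sq hr (hsm.of_le one_le_two) hdir) h0
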